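/- Let 1/2 < s < 1. For any smooth compactly supported function f on ℝ³₊, the mixed norm ‖‖f‖_{L^∞(ℝ₊, dx₃)}‖_{L^{2/s}(ℝ², dx_h)} is bounded, up to a universal constant, by (‖f‖_{L²}‖∂₂f‖_{L²} + ‖∂₁f‖_{L²}‖∂₁∂₂f‖_{L²})^{(1-s)/2} · ‖f‖_{L²}^{(2s-1)/2} · ‖∂₃f‖_{L²}^{1/2}. -/

import Mathlib

open MeasureTheory

def H3 : Set (Fin 3 → ℝ) := {x | 0 < x 2}

noncomputable def pd (i : Fin 3) (f : (Fin 3 → ℝ) → ℝ) : (Fin 3 → ℝ) → ℝ :=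
  fun x => fderiv ℝ f x (Pi.single i 1)

noncomputable def L2 (f : (Fin 3 → ℝ) → ℝ) : ℝ :=
  Real.sqrt (∫ x in H3, (f x) ^ 2)

/-- Embed horizontal variables `y = (x₁,x₂)` and vertical variable `t = x₃` into `ℝ³`. -/
def emb (y : Fin 2 → ℝ) (t : ℝ) : Fin 3 → ℝ := ![y 0, y 1, t]

open Set

theorem one_d (g : ℝ → ℝ) (hg : ContDiff ℝ 1 g) (hc : HasCompactSupport g) (v : ℝ) (S : Set ℝ)
    (hS : Ioi v ⊆ S) : ‖g v‖ₑ ^ 2 ≤ 2 * ∫⁻ u in S, ‖g u‖ₑ * ‖deriv g u‖ₑ := by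
  have h1 : ContDiff ℝ 1 (fun x => g x * g x) := hg.mul hg
  have h2 : HasCompactSupport (fun x => g x * g x) := hc.mul_right
  have h := h2.integral_Ioi_deriv_eq h1 v
  have hd : ∀ x, deriv (fun x => g x * g x) x = 2 * (g x * deriv g x) := by
    intro x
    have := (hg.differentiable (by norm_num) x).hasDerivAt
    have h4 := (this.mul this).deriv
    change deriv (g * g) x = _
    rw [h4]; ring
  have e : ‖g v‖ₑ ^ 2 = ‖∫ x in Ioi v, deriv (fun x => g x * g x) x‖ₑ := by
    rw [h, enorm_neg, enorm_mul, sq]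
  rw [e]
  refine (enorm_integral_le_lintegral_enorm _).trans ?_
  refine (lintegral_mono_set hS).trans ?_
  rw [← lintegral_const_mul' _ _ (by norm_num)]
  refine lintegral_mono fun x => ?_
  simp only [hd, enorm_mul]
  rw [show ‖(2:ℝ)‖ₑ = 2 by rw [← ofReal_norm]; simp]

theorem cs {X : Type*} [MeasurableSpace X] (μ : Measure X) (p q : X → ℝ) (hp : Measurable p)
    (hq : Measurable q) : ∫⁻ x, ‖p x‖ₑ * ‖q x‖ₑ ∂μ ≤
      (∫⁻ x, ‖p x‖ₑ ^ 2 ∂μ) ^ (1/2:ℝ) * (∫⁻ x, ‖q x‖ₑ ^ 2 ∂μ) ^ (1/2:ℝ) := by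
  have := ENNReal.lintegral_mul_le_Lp_mul_Lq μ (p := 2) (q := 2) (by constructor <;> norm_num)
    (f := fun x => ‖p x‖ₑ) (g := fun x => ‖q x‖ₑ) hp.enorm.aemeasurable hq.enorm.aemeasurable
  simpa using this

theorem gen {X : Type*} [MeasurableSpace X] (μ : Measure X) [SFinite μ] (g d : ℝ → X → ℝ)
    (hg : Measurable (Function.uncurry g)) (hd : Measurable (Function.uncurry d))
    (h1 : ∀ x, ContDiff ℝ 1 (fun u => g u x)) (h2 : ∀ x, HasCompactSupport (fun u => g u x))
    (h3 : ∀ u x, deriv (fun u => g u x) u = d u x) (v : ℝ) :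
    ∫⁻ x, ‖g v x‖ₑ ^ 2 ∂μ ≤ 2 * ((∫⁻ u, ∫⁻ x, ‖g u x‖ₑ ^ 2 ∂μ) ^ (1/2:ℝ)
      * (∫⁻ u, ∫⁻ x, ‖d u x‖ₑ ^ 2 ∂μ) ^ (1/2:ℝ)) := by
  have a1 : ∫⁻ x, ‖g v x‖ₑ ^ 2 ∂μ ≤ ∫⁻ x, 2 * (∫⁻ u, ‖g u x‖ₑ * ‖d u x‖ₑ) ∂μ := by
    refine lintegral_mono fun x => ?_
    have := one_d _ (h1 x) (h2 x) v univ (subset_univ _)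
    simpa [h3] using this
  have a2 := cs ((volume : Measure ℝ).prod μ) _ _ hg hd
  rw [lintegral_prod _ (by fun_prop), lintegral_prod _ (by fun_prop), lintegral_prod _ (by fun_prop)] at a2
  refine a1.trans ?_
  rw [lintegral_const_mul' _ _ (by norm_num), lintegral_lintegral_swap (by 
    exact (Measurable.mul (hg.comp measurable_swap).enorm (hd.comp measurable_swap).enorm).aemeasurable)]
  gcongr
  exact a2

theorem fub (φ : (Fin 3 → ℝ) → ENNReal) (hφ : Measurable φ) :
    ∫⁻ x in H3, φ x = ∫⁻ y : Fin 2 → ℝ, ∫⁻ t in Ioi (0:ℝ), φ (emb y t) := by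
  have mH : MeasurableSet H3 := measurableSet_lt measurable_const (measurable_pi_apply 2)
  have e := (volume_preserving_piFinSuccAbove (fun _ : Fin 3 => ℝ) (Fin.last 2)).symm
  rw [← lintegral_indicator mH, ← e.lintegral_comp (hφ.indicator mH)]
  change ∫⁻ a, _ ∂((volume : Measure ℝ).prod (volume : Measure (Fin 2 → ℝ))) = _
  rw [lintegral_prod_symm' _ (by exact (hφ.indicator mH).comp e.measurable)]
  refine lintegral_congr fun y => ?_
  rw [← lintegral_indicator measurableSet_Ioi]
  refine lintegral_congr fun t => ?_
  have : (MeasurableEquiv.piFinSuccAbove (fun _ : Fin 3 => ℝ) (Fin.last 2)).symm (t, y) = emb y t := by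
    ext i
    fin_cases i
    · rfl
    · rfl
    · rfl
  rw [this]
  by_cases ht : 0 < t
  · rw [indicator_of_mem (show emb y t ∈ H3 from ht), indicator_of_mem (show t ∈ Ioi 0 from ht)]
  · rw [indicator_of_notMem (show emb y t ∉ H3 from ht), indicator_of_notMem (show t ∉ Ioi 0 from ht)]

theorem fub2 (φ : (Fin 2 → ℝ) → ENNReal) (hφ : Measurable φ) :
    ∫⁻ y, φ y = ∫⁻ u : ℝ, ∫⁻ v : ℝ, φ ![u, v] := by
  have e := (volume_preserving_finTwoArrow ℝ).symm
  rw [← e.lintegral_comp hφ]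
  change ∫⁻ a, _ ∂((volume : Measure ℝ).prod (volume : Measure ℝ)) = _
  rw [lintegral_prod _ (by exact (hφ.comp e.measurable).aemeasurable)]
  rfl

theorem L2N (f : (Fin 3 → ℝ) → ℝ) (hf : Continuous f) (hc : HasCompactSupport f) :
    ∫⁻ x in H3, ‖f x‖ₑ ^ 2 = ENNReal.ofReal (L2 f) ^ 2 := by
  rw [L2, ← ENNReal.ofReal_pow (by positivity), Real.sq_sqrt (by positivity),
    ofReal_integral_eq_lintegral_ofReal]
  · refine lintegral_congr fun x => ?_
    rw [← ofReal_norm, ← ENNReal.ofReal_pow (by positivity)]; simp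
  · apply Integrable.integrableOn
    apply Continuous.integrable_of_hasCompactSupport (by fun_prop)
    simp only [sq]; exact hc.mul_right
  · exact ae_of_all _ fun x => by positivity

theorem slice (f : (Fin 3 → ℝ) → ℝ) (hf : ContDiff ℝ (⊤ : ℕ∞) f) (hc : HasCompactSupport f)
    (i : Fin 3) (x : Fin 3 → ℝ) :
    ContDiff ℝ 1 (fun u => f (Function.update x i u)) ∧
    HasCompactSupport (fun u => f (Function.update x i u)) ∧
    ∀ u, deriv (fun u => f (Function.update x i u)) u = pd i f (Function.update x i u) := by
  refine ⟨(hf.of_le (by exact_mod_cast le_top)).comp (contDiff_update 1 x i),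
    hc.comp_isClosedEmbedding (isClosedEmbedding_update x i), fun u => ?_⟩
  have h1 := (hf.differentiable (by simp) (Function.update x i u)).hasFDerivAt
  exact (h1.comp_hasDerivAt u (hasDerivAt_update x i u)).deriv

theorem pd_smooth (f : (Fin 3 → ℝ) → ℝ) (hf : ContDiff ℝ (⊤ : ℕ∞) f) (i : Fin 3) :
    ContDiff ℝ (⊤ : ℕ∞) (pd i f) :=
  (hf.fderiv_right (m := (⊤ : ℕ∞)) (by simp)).clm_apply contDiff_const

theorem pd_cpt (f : (Fin 3 → ℝ) → ℝ) (hf : HasCompactSupport f) (i : Fin 3) :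
    HasCompactSupport (pd i f) := hf.fderiv_apply ℝ _

theorem emb0 (u v t : ℝ) : emb ![u, v] t = Function.update ![0, v, t] 0 u := by
  ext i; fin_cases i <;> rfl
theorem emb1 (u v t : ℝ) : emb ![u, v] t = Function.update ![u, 0, t] 1 v := by
  ext i; fin_cases i <;> rfl
theorem emb2 (y : Fin 2 → ℝ) (t : ℝ) : emb y t = Function.update ![y 0, y 1, 0] 2 t := by
  ext i; fin_cases i <;> rfl

theorem emb_cont : Continuous (fun p : (Fin 2 → ℝ) × ℝ => emb p.1 p.2) := by
  unfold emb
  refine continuous_pi fun i => ?_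
  fin_cases i
  · change Continuous (fun p : (Fin 2 → ℝ) × ℝ => p.1 0)
    fun_prop
  · change Continuous (fun p : (Fin 2 → ℝ) × ℝ => p.1 1)
    fun_prop
  · exact continuous_snd

theorem emb_cont3 : Continuous (fun p : ℝ × ℝ × ℝ => emb ![p.1, p.2.1] p.2.2) := by
  unfold emb
  refine continuous_pi fun i => ?_
  fin_cases i
  · exact continuous_fst
  · exact continuous_fst.comp continuous_snd
  · exact continuous_snd.comp continuous_snd

theorem meas_a (f : (Fin 3 → ℝ) → ℝ) (hf : Continuous f) :
    Measurable (fun y : Fin 2 → ℝ => ∫⁻ t in Ioi (0:ℝ), ‖f (emb y t)‖ₑ ^ 2) := by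
  refine Measurable.lintegral_prod_right' (f := fun p : (Fin 2 → ℝ) × ℝ => ‖f (emb p.1 p.2)‖ₑ ^ 2) ?_
  exact (hf.comp emb_cont).measurable.enorm.pow_const 2

theorem fub3 (f : (Fin 3 → ℝ) → ℝ) (hf : Continuous f) :
    ∫⁻ x in H3, ‖f x‖ₑ ^ 2 = ∫⁻ u : ℝ, ∫⁻ v : ℝ, ∫⁻ t in Ioi (0:ℝ), ‖f (emb ![u,v] t)‖ₑ ^ 2 := by
  rw [fub _ (hf.measurable.enorm.pow_const 2), fub2 _ (meas_a f hf)]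

theorem stepc (f : (Fin 3 → ℝ) → ℝ) (hf : ContDiff ℝ (⊤ : ℕ∞) f) (hc : HasCompactSupport f) (w : ℝ) :
    ∫⁻ v : ℝ, ∫⁻ t in Ioi (0:ℝ), ‖f (emb ![w,v] t)‖ₑ ^ 2 ≤
      2 * (ENNReal.ofReal (L2 f) * ENNReal.ofReal (L2 (pd 0 f))) := by
  have hd := pd_smooth f hf 0
  have hdc := pd_cpt f hc 0
  have m1 : Measurable (Function.uncurry fun (u : ℝ) (p : ℝ × ℝ) => f (emb ![u, p.1] p.2)) :=
    (hf.continuous.comp emb_cont3).measurable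
  have m2 : Measurable (Function.uncurry fun (u : ℝ) (p : ℝ × ℝ) => pd 0 f (emb ![u, p.1] p.2)) :=
    (hd.continuous.comp emb_cont3).measurable
  have := gen (X := ℝ × ℝ) ((volume : Measure ℝ).prod (volume.restrict (Ioi (0:ℝ))))
    (fun u p => f (emb ![u, p.1] p.2)) (fun u p => pd 0 f (emb ![u, p.1] p.2)) m1 m2
    (fun p => by simpa only [emb0] using (slice f hf hc 0 ![0, p.1, p.2]).1)
    (fun p => by simpa only [emb0] using (slice f hf hc 0 ![0, p.1, p.2]).2.1)
    (fun u p => by simpa only [emb0] using (slice f hf hc 0 ![0, p.1, p.2]).2.2 u) w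
  have k1 : ∀ u, ∫⁻ p : ℝ × ℝ, ‖f (emb ![u, p.1] p.2)‖ₑ ^ 2 ∂((volume : Measure ℝ).prod (volume.restrict (Ioi (0:ℝ))))
     = ∫⁻ v : ℝ, ∫⁻ t in Ioi (0:ℝ), ‖f (emb ![u,v] t)‖ₑ ^ 2 := fun u => by
    rw [lintegral_prod]
    exact ((m1.comp measurable_prodMk_left).enorm.pow_const 2).aemeasurable
  have k2 : ∀ u, ∫⁻ p : ℝ × ℝ, ‖pd 0 f (emb ![u, p.1] p.2)‖ₑ ^ 2 ∂((volume : Measure ℝ).prod (volume.restrict (Ioi (0:ℝ))))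
     = ∫⁻ v : ℝ, ∫⁻ t in Ioi (0:ℝ), ‖pd 0 f (emb ![u,v] t)‖ₑ ^ 2 := fun u => by
    rw [lintegral_prod]
    exact ((m2.comp measurable_prodMk_left).enorm.pow_const 2).aemeasurable
  simp only [k1, k2] at this
  rw [← fub3 _ hf.continuous, ← fub3 _ hd.continuous, L2N _ hf.continuous hc, L2N _ hd.continuous hdc] at this
  have sq : ∀ z : ENNReal, (z ^ 2) ^ (1/2:ℝ) = z := fun z => by
    rw [← ENNReal.rpow_natCast, ← ENNReal.rpow_mul]; norm_num
  rwa [sq, sq] at this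

theorem amgm (a b c d : ℝ) (ha : 0 ≤ a) (hb : 0 ≤ b) (hc : 0 ≤ c) (hd : 0 ≤ d) :
    2 * ((2 * (a * b)) ^ (1/2:ℝ) * (2 * (c * d)) ^ (1/2:ℝ)) ≤ 2 * (a * c + b * d) := by
  rw [← Real.mul_rpow (by positivity) (by positivity), ← Real.sqrt_eq_rpow]
  gcongr
  apply Real.sqrt_le_iff.2 ⟨by positivity, ?_⟩
  nlinarith [sq_nonneg (a * c - b * d)]

theorem supA (f : (Fin 3 → ℝ) → ℝ) (hf : ContDiff ℝ (⊤ : ℕ∞) f) (hc : HasCompactSupport f)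
    (y : Fin 2 → ℝ) :
    ∫⁻ t in Ioi (0:ℝ), ‖f (emb y t)‖ₑ ^ 2 ≤
      ENNReal.ofReal (2 * (L2 f * L2 (pd 1 f) + L2 (pd 0 f) * L2 (pd 0 (pd 1 f)))) := by
  have hd := pd_smooth f hf 1
  have hdc := pd_cpt f hc 1
  have n : ∀ g, 0 ≤ L2 g := fun g => Real.sqrt_nonneg _
  have ec : Continuous (fun p : ℝ × ℝ => emb ![y 0, p.1] p.2) :=
    emb_cont3.comp (by fun_prop : Continuous fun p : ℝ × ℝ => (y 0, p))
  have := gen (X := ℝ) (volume.restrict (Ioi (0:ℝ)))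
    (fun u t => f (emb ![y 0, u] t)) (fun u t => pd 1 f (emb ![y 0, u] t))
    (hf.continuous.comp ec).measurable (hd.continuous.comp ec).measurable
    (fun p => by simpa only [emb1] using (slice f hf hc 1 ![y 0, 0, p]).1)
    (fun p => by simpa only [emb1] using (slice f hf hc 1 ![y 0, 0, p]).2.1)
    (fun u p => by simpa only [emb1] using (slice f hf hc 1 ![y 0, 0, p]).2.2 u) (y 1)
  have ey : ![y 0, y 1] = y := by ext i; fin_cases i <;> rfl
  rw [ey] at this
  refine (this.trans ?_).trans (ENNReal.ofReal_le_ofReal (amgm _ _ _ _ (n f) (n (pd 0 f)) (n (pd 1 f)) (n (pd 0 (pd 1 f)))))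
  rw [ENNReal.ofReal_mul (by norm_num), ENNReal.ofReal_mul (by have := n f; have := n (pd 0 f); positivity),
    ← ENNReal.ofReal_rpow_of_nonneg (by have := n f; have := n (pd 0 f); positivity) (by norm_num),
    ← ENNReal.ofReal_rpow_of_nonneg (by have := n (pd 1 f); have := n (pd 0 (pd 1 f)); positivity) (by norm_num),
    ENNReal.ofReal_mul (by norm_num), ENNReal.ofReal_mul (n _),
    ENNReal.ofReal_mul (by norm_num), ENNReal.ofReal_mul (n _), ENNReal.ofReal_ofNat]
  gcongr
  · exact stepc f hf hc _
  · exact stepc _ hd hdc _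

theorem ptF (f : (Fin 3 → ℝ) → ℝ) (hf : ContDiff ℝ (⊤ : ℕ∞) f) (hc : HasCompactSupport f)
    (y : Fin 2 → ℝ) :
    ENNReal.ofReal (⨆ t : Set.Ioi (0:ℝ), |f (emb y (t : ℝ))|) ≤
      (2 * ((∫⁻ t in Ioi (0:ℝ), ‖f (emb y t)‖ₑ ^ 2) ^ (1/2:ℝ) *
        (∫⁻ t in Ioi (0:ℝ), ‖pd 2 f (emb y t)‖ₑ ^ 2) ^ (1/2:ℝ))) ^ (1/2:ℝ) := by
  have hd := pd_smooth f hf 2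
  have ec : Continuous (fun t : ℝ => emb y t) :=
    emb_cont.comp (by fun_prop : Continuous fun t : ℝ => (y, t))
  have key : ∀ t : Ioi (0:ℝ), ‖f (emb y t)‖ₑ ≤ (2 * ((∫⁻ t in Ioi (0:ℝ), ‖f (emb y t)‖ₑ ^ 2) ^ (1/2:ℝ) *
        (∫⁻ t in Ioi (0:ℝ), ‖pd 2 f (emb y t)‖ₑ ^ 2) ^ (1/2:ℝ))) ^ (1/2:ℝ) := fun t => by
    have h1 := one_d _ (slice f hf hc 2 ![y 0, y 1, 0]).1 (slice f hf hc 2 ![y 0, y 1, 0]).2.1 t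
      (Ioi 0) (Ioi_subset_Ioi t.2.le)
    simp only [(slice f hf hc 2 ![y 0, y 1, 0]).2.2] at h1
    simp only [← emb2] at h1
    have h2 := h1.trans (mul_le_mul_right (cs (volume.restrict (Ioi (0:ℝ))) _ _ (hf.continuous.comp ec).measurable
      (hd.continuous.comp ec).measurable) 2)
    have h3 := ENNReal.rpow_le_rpow h2 (by norm_num : (0:ℝ) ≤ 1/2)
    rw [← ENNReal.rpow_natCast, ← ENNReal.rpow_mul] at h3
    rw [show ((2:ℕ):ℝ) * (1/2) = 1 by norm_num, ENNReal.rpow_one] at h3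
    exact h3
  generalize (2 * ((∫⁻ t in Ioi (0:ℝ), ‖f (emb y t)‖ₑ ^ 2) ^ (1/2:ℝ) *
        (∫⁻ t in Ioi (0:ℝ), ‖pd 2 f (emb y t)‖ₑ ^ 2) ^ (1/2:ℝ))) ^ (1/2:ℝ) = B at *
  by_cases hB : B = ⊤
  · simp [hB]
  have : Nonempty (Ioi (0:ℝ)) := ⟨⟨1, by simp⟩⟩
  apply ENNReal.ofReal_le_of_le_toReal
  refine ciSup_le fun t => ?_
  rw [← ENNReal.ofReal_le_iff_le_toReal hB, ← Real.norm_eq_abs, ofReal_norm]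
  exact key t

theorem holder_fin {X : Type*} [MeasurableSpace X] (μ : Measure X) (s : ℝ) (hs1 : 1/2 < s) (hs2 : s < 1)
    (a b : X → ENNReal) (ha : Measurable a) (hb : Measurable b) (M : ENNReal) (hM : ∀ y, a y ≤ M) :
    ∫⁻ y, ((2 * (a y ^ (1/2:ℝ) * b y ^ (1/2:ℝ))) ^ (1/2:ℝ)) ^ (2/s) ∂μ ≤
      2 ^ (1/s) * (((∫⁻ y, a y ∂μ) * M ^ ((2-2*s)/(2*s-1))) ^ ((2*s-1)/(2*s)) *
        (∫⁻ y, b y ∂μ) ^ (1/(2*s))) := by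
  have s0 : 0 < s := by linarith
  have s1 : 0 < 2*s-1 := by linarith
  have hh : (2*s/(2*s-1)).HolderConjugate (2*s) := by
    rw [Real.holderConjugate_iff]
    constructor
    · rw [lt_div_iff₀ s1]; linarith
    · field_simp; ring
  have h := ENNReal.lintegral_mul_le_Lp_mul_Lq μ hh (f := fun y => a y ^ (1/(2*s)))
    (g := fun y => b y ^ (1/(2*s))) (ha.pow_const _).aemeasurable (hb.pow_const _).aemeasurable
  have e1 : ∀ y, ((2 * (a y ^ (1/2:ℝ) * b y ^ (1/2:ℝ))) ^ (1/2:ℝ)) ^ (2/s) =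
      2 ^ (1/s) * (a y ^ (1/(2*s)) * b y ^ (1/(2*s))) := fun y => by
    rw [← ENNReal.rpow_mul, show (1/2:ℝ) * (2/s) = 1/s by field_simp,
      ENNReal.mul_rpow_of_nonneg _ _ (by positivity), ENNReal.mul_rpow_of_nonneg _ _ (by positivity),
      ← ENNReal.rpow_mul, ← ENNReal.rpow_mul, show (1/2:ℝ) * (1/s) = 1/(2*s) by field_simp]
  simp_rw [e1]
  rw [lintegral_const_mul' _ _ (by finiteness)]
  gcongr
  refine h.trans ?_
  have e2 : ∀ y, (b y ^ (1/(2*s))) ^ (2*s) = b y := fun y => by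
    rw [← ENNReal.rpow_mul, show 1/(2*s) * (2*s) = 1 by field_simp, ENNReal.rpow_one]
  simp_rw [e2]
  rw [show 1 / (2*s/(2*s-1)) = (2*s-1)/(2*s) by field_simp]
  gcongr
  rw [← lintegral_mul_const _ ha]
  refine lintegral_mono fun y => ?_
  have p : 0 ≤ (2-2*s)/(2*s-1) := div_nonneg (by linarith) s1.le
  rw [← ENNReal.rpow_mul, show 1/(2*s) * (2*s/(2*s-1)) = 1 + (2-2*s)/(2*s-1) by field_simp; ring,
    ENNReal.rpow_add_of_nonneg _ _ (by norm_num) p, ENNReal.rpow_one]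
  gcongr
  exact hM y

theorem mixed_norm_anisotropic (s : ℝ) (hs1 : 1/2 < s) (hs2 : s < 1) :
    ∃ C : ℝ, 0 < C ∧ ∀ f : (Fin 3 → ℝ) → ℝ,
      ContDiff ℝ (⊤ : ℕ∞) f → HasCompactSupport f →
      (∫ y : Fin 2 → ℝ, (⨆ t : Set.Ioi (0:ℝ), |f (emb y (t : ℝ))|) ^ ((2:ℝ)/s)) ^ (s/2) ≤
        C * (L2 f * L2 (pd 1 f) + L2 (pd 0 f) * L2 (pd 0 (pd 1 f))) ^ ((1 - s)/2)
          * L2 f ^ ((2*s - 1)/2) * L2 (pd 2 f) ^ ((1:ℝ)/2) := by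
  have s0 : 0 < s := by linarith
  have s1 : 0 < 2*s-1 := by linarith
  have s2 : 0 < 1 - s := by linarith
  refine ⟨2 ^ (1/2:ℝ) * 2 ^ ((1-s)/2), by positivity, fun f hf hc => ?_⟩
  have n : ∀ g, 0 ≤ L2 g := fun g => Real.sqrt_nonneg _
  have hd := pd_smooth f hf 2
  have hdc := pd_cpt f hc 2
  have hK : 0 ≤ L2 f * L2 (pd 1 f) + L2 (pd 0 f) * L2 (pd 0 (pd 1 f)) :=
    add_nonneg (mul_nonneg (n _) (n _)) (mul_nonneg (n _) (n _))
  have hF : ∀ y, 0 ≤ ⨆ t : Set.Ioi (0:ℝ), |f (emb y (t : ℝ))| := fun y =>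
    Real.iSup_nonneg fun t => abs_nonneg _
  have hsup := supA f hf hc
  generalize L2 f * L2 (pd 1 f) + L2 (pd 0 f) * L2 (pd 0 (pd 1 f)) = K at *
  have h1 : ENNReal.ofReal (∫ y : Fin 2 → ℝ, (⨆ t : Set.Ioi (0:ℝ), |f (emb y (t : ℝ))|) ^ ((2:ℝ)/s))
      ≤ ∫⁻ y : Fin 2 → ℝ, ENNReal.ofReal (⨆ t : Set.Ioi (0:ℝ), |f (emb y (t : ℝ))|) ^ ((2:ℝ)/s) := by
    rw [← Real.enorm_of_nonneg (integral_nonneg fun y => Real.rpow_nonneg (hF y) _)]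
    refine (enorm_integral_le_lintegral_enorm _).trans (le_of_eq ?_)
    refine lintegral_congr fun y => ?_
    rw [Real.enorm_of_nonneg (Real.rpow_nonneg (hF y) _),
      ENNReal.ofReal_rpow_of_nonneg (hF y) (by positivity)]
  have h2 := h1.trans ((lintegral_mono fun y => ENNReal.rpow_le_rpow (ptF f hf hc y)
    (by positivity : 0 ≤ 2/s)).trans (holder_fin volume s hs1 hs2 _ _ (meas_a f hf.continuous)
      (meas_a _ hd.continuous) _ hsup))
  rw [← fub _ (hf.continuous.measurable.enorm.pow_const 2),
    ← fub _ (hd.continuous.measurable.enorm.pow_const 2), L2N _ hf.continuous hc,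
    L2N _ hd.continuous hdc] at h2
  have h3 := ENNReal.rpow_le_rpow h2 (by positivity : 0 ≤ s/2)
  have q : 0 ≤ (2*s-1)/(2*s) := by positivity
  have p : 0 ≤ (2-2*s)/(2*s-1) := div_nonneg (by linarith) s1.le
  rw [ENNReal.mul_rpow_of_nonneg _ _ (by positivity), ENNReal.mul_rpow_of_nonneg _ _ (by positivity),
    ENNReal.mul_rpow_of_nonneg _ _ q, ENNReal.mul_rpow_of_nonneg _ _ (by positivity)] at h3
  simp only [← ENNReal.rpow_natCast, ← ENNReal.rpow_mul] at h3
  rw [show 1/s * (s/2) = 1/2 by field_simp,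
    show ((2:ℕ):ℝ) * ((2*s-1)/(2*s)) * (s/2) = (2*s-1)/2 by push_cast; field_simp,
    show (2-2*s)/(2*s-1) * ((2*s-1)/(2*s)) * (s/2) = (1-s)/2 by field_simp,
    show ((2:ℕ):ℝ) * (1/(2*s)) * (s/2) = 1/2 by push_cast; field_simp] at h3
  rw [show (2:ENNReal) = ENNReal.ofReal (2:ℝ) by simp,
    ENNReal.ofReal_rpow_of_nonneg (x := 2) (by norm_num) (by norm_num),
    ENNReal.ofReal_rpow_of_nonneg (x := L2 f) (n _) (by positivity),
    ENNReal.ofReal_rpow_of_nonneg (x := 2 * K) (by positivity) (by positivity),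
    ENNReal.ofReal_rpow_of_nonneg (x := L2 (pd 2 f)) (n _) (by positivity),
    ENNReal.ofReal_rpow_of_nonneg (integral_nonneg fun y => Real.rpow_nonneg (hF y) _) (by positivity),
    ← ENNReal.ofReal_mul (Real.rpow_nonneg (n _) _),
    ← ENNReal.ofReal_mul (mul_nonneg (Real.rpow_nonneg (n _) _) (by positivity)),
    ← ENNReal.ofReal_mul (by positivity)] at h3
  have n1 := Real.rpow_nonneg (n f) ((2*s-1)/2)
  have n2 := Real.rpow_nonneg (n (pd 2 f)) (1/2)
  have h4 := (ENNReal.ofReal_le_ofReal_iff (by positivity)).1 h3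
  refine h4.trans (le_of_eq ?_)
  rw [Real.mul_rpow (by norm_num) hK]
  ring
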